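/- arXiv:2305.07567 — 2 statements merged into one kernel-verified Lean document; each statement's English description precedes it below -/
import Mathlib

section
/- Let M = (L(E), ρ) be a (q,r)-polymatroid on E = F_q^n and let H be a hyperplane of E. If some complement of H (a 1-dimensional subspace e with e ∩ H = 0 and e + H = E) is a loop of M, then P(M|_H; z) = ∑_{y 1-dimensional subspace of E, y ⊄ H} P(M/y; z) as polynomials in ℤ[z]. -/
/-- The characteristic polynomial of the minor `M([X,Y])` of a `(q,r)`-polymatroid
(more generally, of a weighted lattice) with rank function `ρ`:
`P(M([X,Y]); z) = ∑_{X ≤ A ≤ Y} μ(X,A) · z^(ρ(Y) - ρ(A))`. -/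
noncomputable def charPoly {L : Type*} [Lattice L] (μ : L → L → ℤ) (ρ : L → ℕ) (X Y : L) :
    Polynomial ℤ :=
  ∑ᶠ A ∈ Set.Icc X Y, μ X A • ((Polynomial.X : Polynomial ℤ) ^ (ρ Y - ρ A))

open Classical in
lemma weisner_aux {L : Type*} [Lattice L] [Fintype L] (g : L → ℤ) (e : L)
    (hg : ∀ b, e ≤ b → ∑ z with z ≤ b, g z = 0) :
    ∀ b, ∑ z with z ⊔ e = b, g z = 0 := by
  intro b
  induction b using WellFoundedLT.induction with
  | ind b ih =>
    by_cases heb : e ≤ b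
    · have h1 := hg b heb
      rw [← Finset.sum_fiberwise _ (fun z => z ⊔ e), Finset.sum_eq_single b] at h1
      · rw [← h1, Finset.filter_filter]
        refine Finset.sum_congr (Finset.filter_congr fun z _ => ?_) fun _ _ => rfl
        constructor
        · intro h; exact ⟨h ▸ le_sup_left, h⟩
        · exact fun h => h.2
      · intro c _ hc
        rw [Finset.filter_filter]
        by_cases hcb : c ≤ b
        · rw [← ih c (lt_of_le_of_ne hcb hc)]
          refine Finset.sum_congr (Finset.filter_congr fun z _ => ?_) fun _ _ => rfl
          constructor
          · exact fun h => h.2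
          · intro h; exact ⟨le_trans (h ▸ le_sup_left) hcb, h⟩
        · apply Finset.sum_eq_zero
          intro z hz
          rw [Finset.mem_filter] at hz
          exact absurd (hz.2.2 ▸ sup_le hz.2.1 heb) hcb
      · simp
    · apply Finset.sum_eq_zero
      intro z hz
      rw [Finset.mem_filter] at hz
      exact absurd (hz.2 ▸ le_sup_right) heb

open Classical in
lemma weisner_dual {L : Type*} [Lattice L] [Fintype L] (g : L → ℤ) (e : L)
    (hg : ∀ b, b ≤ e → ∑ z with b ≤ z, g z = 0) :
    ∀ b, ∑ z with z ⊓ e = b, g z = 0 :=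
  weisner_aux (L := Lᵒᵈ) g e hg

open Classical in
lemma mobius_left {L : Type*} [PartialOrder L] [Fintype L] (μ : L → L → ℤ)
    (hμ_refl : ∀ X, μ X X = 1)
    (hμ_rec : ∀ X Y, X < Y → μ X Y = -∑ᶠ Z ∈ Set.Ico X Y, μ X Z) (X Y : L) (h : X < Y) :
    ∑ z with X ≤ z ∧ z ≤ Y, μ X z = 0 := by
  have h1 := hμ_rec X Y h
  rw [show (Set.Ico X Y) = ((Finset.univ.filter fun z => X ≤ z ∧ z < Y : Finset L) : Set L) by
    ext; simp, finsum_mem_coe_finset] at h1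
  have h2 : (Finset.univ.filter fun z => X ≤ z ∧ z ≤ Y)
      = insert Y (Finset.univ.filter fun z => X ≤ z ∧ z < Y) := by
    ext z
    simp only [Finset.mem_filter, Finset.mem_univ, true_and, Finset.mem_insert]
    constructor
    · rintro ⟨a, b⟩
      rcases eq_or_lt_of_le b with b | b
      · exact Or.inl b
      · exact Or.inr ⟨a, b⟩
    · rintro (rfl | ⟨a, b⟩)
      · exact ⟨h.le, le_rfl⟩
      · exact ⟨a, b.le⟩
  rw [h2, Finset.sum_insert (by simp), h1, neg_add_cancel]

open Classical in
lemma mobius_right {L : Type*} [PartialOrder L] [Fintype L] (μ : L → L → ℤ)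
    (hμ_refl : ∀ X, μ X X = 1)
    (hμ_rec : ∀ X Y, X < Y → μ X Y = -∑ᶠ Z ∈ Set.Ico X Y, μ X Z) (X Y : L) (h : X < Y) :
    ∑ z with X ≤ z ∧ z ≤ Y, μ z Y = 0 := by
  let M : Matrix L L ℤ := fun a b => if a ≤ b then μ a b else 0
  let Z : Matrix L L ℤ := fun a b => if a ≤ b then 1 else 0
  have h1 : M * Z = 1 := by
    ext a b
    have : (M * Z) a b = ∑ z with a ≤ z ∧ z ≤ b, μ a z := by
      rw [Matrix.mul_apply, Finset.sum_filter]
      refine Finset.sum_congr rfl fun z _ => ?_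
      by_cases h1 : a ≤ z <;> by_cases h2 : z ≤ b <;> simp [M, Z, h1, h2]
    rw [this, Matrix.one_apply]
    split_ifs with hab
    · subst hab
      rw [Finset.sum_eq_single a]
      · exact hμ_refl a
      · intro c hc hca
        rw [Finset.mem_filter] at hc
        exact absurd (le_antisymm hc.2.2 hc.2.1) hca
      · simp
    · by_cases hle : a ≤ b
      · exact mobius_left μ hμ_refl hμ_rec a b (lt_of_le_of_ne hle hab)
      · apply Finset.sum_eq_zero
        intro z hz
        rw [Finset.mem_filter] at hz
        exact absurd (hz.2.1.trans hz.2.2) hle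
  have h2 : Z * M = 1 := mul_eq_one_comm.mp h1
  have h3 := congrFun (congrFun h2 X) Y
  rw [Matrix.one_apply_ne h.ne, Matrix.mul_apply] at h3
  rw [← h3, Finset.sum_filter]
  refine Finset.sum_congr rfl fun z _ => ?_
  by_cases h1 : X ≤ z <;> by_cases h2 : z ≤ Y <;> simp [M, Z, h1, h2]

open Classical in
lemma charPoly_eq_sum {L : Type*} [Lattice L] [Fintype L] (μ : L → L → ℤ) (ρ : L → ℕ) (X Y : L) :
    charPoly μ ρ X Y =
      ∑ A with X ≤ A ∧ A ≤ Y, μ X A • ((Polynomial.X : Polynomial ℤ) ^ (ρ Y - ρ A)) := by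
  unfold charPoly
  rw [← finsum_mem_coe_finset]
  congr! 3
  simp


/-- let `M = (L(E), ρ)` be a `(q,r)`-polymatroid on `E = F_q^n` and `H` a
hyperplane of `E`.  If some complement of `H` is a loop of `M`, then
`P(M|_H; z) = ∑_{y 1-dimensional, y ⊄ H} P(M/y; z)`. -/
theorem charPoly_restriction_of_loop_complement
    {F : Type*} [Field F] [Fintype F] {n : ℕ} (hn : 0 < n)
    (r : ℕ) (hr : 0 < r)
    (ρ : Submodule F (Fin n → F) → ℕ)
    (hbound : ∀ A : Submodule F (Fin n → F), ρ A ≤ r * Module.finrank F A)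
    (hmono : Monotone ρ)
    (hsubmod : ∀ A B : Submodule F (Fin n → F), ρ (A ⊔ B) + ρ (A ⊓ B) ≤ ρ A + ρ B)
    (μ : Submodule F (Fin n → F) → Submodule F (Fin n → F) → ℤ)
    (hμ_refl : ∀ X, μ X X = 1)
    (hμ_rec : ∀ X Y, X < Y → μ X Y = -∑ᶠ Z ∈ Set.Ico X Y, μ X Z)
    (H : Submodule F (Fin n → F)) (hH : IsCoatom H)
    (hloop : ∃ e : Submodule F (Fin n → F),
      Module.finrank F e = 1 ∧ e ⊓ H = ⊥ ∧ e ⊔ H = ⊤ ∧ ρ e = 0) :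
    charPoly μ ρ ⊥ H =
      ∑ᶠ y ∈ {y : Submodule F (Fin n → F) | Module.finrank F y = 1 ∧ ¬ y ≤ H},
        charPoly μ ρ y ⊤ := by
  classical
  haveI : Fintype (Submodule F (Fin n → F)) := Fintype.ofFinite _
  obtain ⟨e, he1, heH, heT, hρe⟩ := hloop
  have hne : e ≠ ⊥ := by
    rintro rfl
    simp at he1
  have hρ : ∀ A, ρ (A ⊔ e) = ρ A := by
    intro A
    have := hsubmod A e
    exact le_antisymm (by omega) (hmono le_sup_left)
  have hρH : ρ H = ρ ⊤ := by rw [← heT, sup_comm, hρ]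
  -- the characteristic polynomial of `M` vanishes
  have hW := weisner_aux (fun z => μ ⊥ z) e (by
    intro b hb
    have := mobius_left μ hμ_refl hμ_rec ⊥ b
      (lt_of_lt_of_le (bot_lt_iff_ne_bot.mpr hne) hb)
    simpa using this)
  have hP : ∑ A, μ ⊥ A • ((Polynomial.X : Polynomial ℤ) ^ (ρ ⊤ - ρ A)) = 0 := by
    rw [← Finset.sum_fiberwise _ (fun z => z ⊔ e)]
    apply Finset.sum_eq_zero
    intro B _
    have : ∀ A ∈ Finset.univ.filter (fun z => z ⊔ e = B),
        μ ⊥ A • ((Polynomial.X : Polynomial ℤ) ^ (ρ ⊤ - ρ A))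
          = μ ⊥ A • ((Polynomial.X : Polynomial ℤ) ^ (ρ ⊤ - ρ B)) := by
      intro A hA
      rw [Finset.mem_filter] at hA
      rw [← hA.2, hρ]
    have h0 : ∑ z with z ⊔ e = B, μ ⊥ z = 0 := by convert hW B
    rw [Finset.sum_congr rfl this, ← Finset.sum_smul, h0, zero_smul]
  -- the dual Weisner identity
  have hD : ∀ A, ¬ A ≤ H →
      ∑ y ∈ Finset.univ.filter (fun y : Submodule F (Fin n → F) =>
        (Module.finrank F y = 1 ∧ ¬ y ≤ H) ∧ y ≤ A), μ y A = - μ ⊥ A := by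
    intro A hA
    have hw := weisner_dual (fun z => if z ≤ A then μ z A else 0) H (by
        intro b hb
        by_cases hbA : b ≤ A
        · have hlt : b < A := lt_of_le_of_ne hbA (fun h => hA (h ▸ hb))
          have := mobius_right μ hμ_refl hμ_rec _ A hlt
          rw [← Finset.filter_filter, Finset.sum_filter] at this
          exact this
        · apply Finset.sum_eq_zero
          intro z hz
          rw [Finset.mem_filter] at hz
          rw [if_neg fun h => hbA (hz.2.trans h)]) ⊥
    have hw' : ∑ z with z ⊓ H = ⊥, (if z ≤ A then μ z A else 0) = 0 := by
      convert hw
    rw [← Finset.sum_filter, Finset.filter_filter] at hw'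
    have hset : (Finset.univ.filter fun z : Submodule F (Fin n → F) => z ⊓ H = ⊥ ∧ z ≤ A)
        = insert ⊥ (Finset.univ.filter fun y : Submodule F (Fin n → F) =>
          (Module.finrank F y = 1 ∧ ¬ y ≤ H) ∧ y ≤ A) := by
      ext z
      simp only [Finset.mem_filter, Finset.mem_univ, true_and, Finset.mem_insert]
      constructor
      · rintro ⟨h1, h2⟩
        by_cases hz : z = ⊥
        · exact Or.inl hz
        · have hzH : ¬ z ≤ H := fun h => hz (by rwa [inf_eq_left.mpr h] at h1)
          refine Or.inr ⟨⟨?_, hzH⟩, h2⟩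
          have hsup : z ⊔ H = ⊤ := hH.2 _ (lt_of_le_of_ne le_sup_right
            (fun h => hzH (h ▸ le_sup_left)))
          have d1 := Submodule.finrank_sup_add_finrank_inf_eq z H
          have d2 := Submodule.finrank_sup_add_finrank_inf_eq e H
          rw [hsup, h1] at d1
          rw [heT, heH] at d2
          omega
      · rintro (rfl | ⟨⟨h1, h2⟩, h3⟩)
        · simp
        · refine ⟨?_, h3⟩
          by_contra hne0
          have hpos : 0 < Module.finrank F (z ⊓ H : Submodule F (Fin n → F)) := by
            rw [Nat.pos_iff_ne_zero]
            exact fun h => hne0 (Submodule.finrank_eq_zero.mp h)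
          exact h2 (inf_eq_left.mp
            (Submodule.eq_of_le_of_finrank_le inf_le_left (by omega)))
    rw [hset, Finset.sum_insert (by simp)] at hw'
    linarith
  rw [show {y : Submodule F (Fin n → F) | Module.finrank F y = 1 ∧ ¬ y ≤ H}
    = ((Finset.univ.filter fun y : Submodule F (Fin n → F) => Module.finrank F y = 1 ∧ ¬ y ≤ H :
      Finset (Submodule F (Fin n → F))) : Set _) by ext; simp, finsum_mem_coe_finset]
  simp only [charPoly_eq_sum, bot_le, le_top, true_and, and_true, hρH]
  have hswap : ∑ y ∈ Finset.univ.filter (fun y : Submodule F (Fin n → F) =>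
      (Module.finrank F y = 1 ∧ ¬ y ≤ H)), ∑ A with y ≤ A,
      μ y A • ((Polynomial.X : Polynomial ℤ) ^ (ρ ⊤ - ρ A))
      = ∑ A with ¬ A ≤ H, ∑ y ∈ Finset.univ.filter (fun y : Submodule F (Fin n → F) =>
        (Module.finrank F y = 1 ∧ ¬ y ≤ H) ∧ y ≤ A),
        μ y A • ((Polynomial.X : Polynomial ℤ) ^ (ρ ⊤ - ρ A)) := by
    apply Finset.sum_comm'
    intro y A
    simp only [Finset.mem_filter, Finset.mem_univ, true_and]
    constructor
    · rintro ⟨h1, h2⟩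
      exact ⟨⟨h1, h2⟩, fun h => h1.2 (h2.trans h)⟩
    · rintro ⟨h1, _⟩
      exact h1
  rw [hswap]
  rw [← Finset.sum_filter_add_sum_filter_not _ (fun A => A ≤ H)] at hP
  rw [eq_neg_of_add_eq_zero_left hP, ← Finset.sum_neg_distrib]
  refine Finset.sum_congr rfl fun A hA => ?_
  rw [Finset.mem_filter] at hA
  rw [← Finset.sum_smul, hD A hA.2, neg_smul]
end

section
/- Let M = (L(E), ρ) be a (q,r)-polymatroid on E = F_q^n, let H be a hyperplane of E that is a coloop of M (i.e., ρ(H) = ρ(E) − r), and let e be a complement of H (a 1-dimensional subspace with e ∩ H = 0 and e + H = E). Then P(M; z) = P(M|_e; z)·P(M/e; z) − ∑_{y 1-dimensional subspace of E, y ⊄ H, y ≠ e} P(M/y; z) as polynomials in ℤ[z]. -/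
namespace CPAux

open Polynomial

open Classical in
theorem finsum_mem_ite {L M : Type*} [Fintype L] [AddCommMonoid M] (S : Set L) (f : L → M) :
    ∑ᶠ A ∈ S, f A = ∑ A, if A ∈ S then f A else 0 := by
  rw [finsum_mem_def, finsum_eq_sum_of_fintype]
  simp only [Set.indicator_apply]

section
variable {L : Type*} [Lattice L] [BoundedOrder L] [Fintype L]

open Classical in
theorem mu_sum (μ : L → L → ℤ) (h1 : ∀ X, μ X X = 1)
    (h2 : ∀ X Y, X < Y → μ X Y = -∑ᶠ Z ∈ Set.Ico X Y, μ X Z) (X Y : L) :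
    ∑ Z, (if X ≤ Z ∧ Z ≤ Y then μ X Z else 0) = if X = Y then 1 else 0 := by
  by_cases hXY : X = Y
  · subst hXY
    rw [Finset.sum_eq_single X]
    · simp [h1]
    · intro b _ hb
      rw [if_neg]
      rintro ⟨h, h'⟩
      exact hb (le_antisymm h' h)
    · simp
  · rw [if_neg hXY]
    by_cases hle : X ≤ Y
    · have hlt := lt_of_le_of_ne hle hXY
      have h := h2 X Y hlt
      rw [finsum_mem_ite] at h
      have : ∑ Z, (if X ≤ Z ∧ Z ≤ Y then μ X Z else 0)
          = ∑ Z, ((if Z ∈ Set.Ico X Y then μ X Z else 0) + if Z = Y then μ X Y else 0) := by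
        refine Finset.sum_congr rfl fun Z _ => ?_
        by_cases hZ : Z = Y
        · subst hZ; simp [hle]
        · simp [hZ, Set.mem_Ico, lt_iff_le_and_ne]
      rw [this, Finset.sum_add_distrib]
      simp only [Finset.sum_ite_eq', Finset.mem_univ, if_true]
      rw [h]
      convert Int.add_right_neg _
    · apply Finset.sum_eq_zero
      intro Z _
      rw [if_neg]
      rintro ⟨h, h'⟩
      exact hle (h.trans h')

/-- a function on a finite poset is determined by its lower sums -/
theorem ext_lower (g h : L → ℤ)
    (H : ∀ B, (open Classical in ∑ A, (if A ≤ B then g A else 0))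
      = open Classical in ∑ A, (if A ≤ B then h A else 0)) : g = h := by
  classical
  funext B
  induction B using WellFoundedLT.induction with
  | ind B ih =>
    have hB := H B
    have key : ∀ f : L → ℤ, ∑ A, (if A ≤ B then f A else 0)
        = ∑ A, (if A < B then f A else 0) + f B := by
      intro f
      have : ∑ A, (if A ≤ B then f A else 0)
          = ∑ A, ((if A < B then f A else 0) + if A = B then f B else 0) := by
        refine Finset.sum_congr rfl fun Z _ => ?_
        by_cases hZ : Z = B
        · subst hZ; simp
        · simp [hZ, lt_iff_le_and_ne]
      rw [this, Finset.sum_add_distrib]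
      simp
    rw [key, key] at hB
    have : ∑ A, (if A < B then g A else 0) = ∑ A, (if A < B then h A else 0) := by
      refine Finset.sum_congr rfl fun Z _ => ?_
      split_ifs with hz
      · exact ih Z hz
      · rfl
    linarith

open Classical in
theorem weisner [IsModularLattice L] (μ : L → L → ℤ) (h1 : ∀ X, μ X X = 1)
    (h2 : ∀ X Y, X < Y → μ X Y = -∑ᶠ Z ∈ Set.Ico X Y, μ X Z) (H : L) (hH : IsCoatom H) (A : L) :
    ∑ y, (if (IsAtom y ∧ ¬ y ≤ H) ∧ y ≤ A then μ y A else 0)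
      = if A ≤ H then 0 else - μ ⊥ A := by
  have hs := mu_sum μ h1 h2
  refine congrFun (ext_lower
    (fun A => ∑ y, (if (IsAtom y ∧ ¬ y ≤ H) ∧ y ≤ A then μ y A else 0))
    (fun A => if A ≤ H then 0 else - μ ⊥ A) ?_) A
  intro B
  have hL : ∑ A, (if A ≤ B then ∑ y, (if (IsAtom y ∧ ¬ y ≤ H) ∧ y ≤ A then μ y A else 0) else 0)
      = if IsAtom B ∧ ¬ B ≤ H then 1 else 0 := by
    calc _ = ∑ A, ∑ y, (if (IsAtom y ∧ ¬ y ≤ H) then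
                (if y ≤ A ∧ A ≤ B then μ y A else 0) else 0) := by
            refine Finset.sum_congr rfl fun A _ => ?_
            by_cases hA : A ≤ B
            · simp only [hA, if_true, and_true]
              refine Finset.sum_congr rfl fun y _ => ?_
              by_cases hy : (IsAtom y ∧ ¬ y ≤ H) <;> simp [hy]
            · simp [hA]
      _ = ∑ y, (if (IsAtom y ∧ ¬ y ≤ H) then (if y = B then 1 else 0) else 0) := by
            rw [Finset.sum_comm]
            refine Finset.sum_congr rfl fun y _ => ?_
            split_ifs with h h'
            · rw [hs, if_pos h']
            · rw [hs, if_neg h']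
            · simp
      _ = _ := by
            rw [Finset.sum_eq_single B]
            · simp
            · intro b _ hb; simp [hb]
            · simp
  have hR : ∑ A, (if A ≤ B then (if A ≤ H then 0 else - μ ⊥ A) else 0)
      = (if ⊥ = B ⊓ H then 1 else 0) - if ⊥ = B then 1 else 0 := by
    rw [← hs ⊥ B, ← hs ⊥ (B ⊓ H), ← Finset.sum_sub_distrib]
    refine Finset.sum_congr rfl fun A _ => ?_
    by_cases hA : A ≤ B <;> by_cases hA' : A ≤ H <;> simp [hA, hA']
  simp only [hL, hR]
  by_cases hB : ⊥ = B
  · subst hB; simp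
  · rw [if_neg hB, sub_zero]
    congr 1
    apply propext
    constructor
    · rintro ⟨h, h'⟩
      rcases h.le_iff.1 (inf_le_left : B ⊓ H ≤ B) with h3 | h3
      · exact h3.symm
      · exact absurd (inf_eq_left.1 h3) h'
    · intro h
      have hn : ¬ B ≤ H := fun hle => hB (h.trans (inf_eq_left.2 hle))
      refine ⟨?_, hn⟩
      have hc : IsCompl B H := by
        refine IsCompl.of_eq h.symm ?_
        exact hH.2 _ (lt_of_le_of_ne le_sup_right fun h => hn (h ▸ le_sup_left))
      exact hc.isAtom_iff_isCoatom.2 hH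

open Classical in
theorem mu_shift [IsModularLattice L] (μ : L → L → ℤ) (h1 : ∀ X, μ X X = 1)
    (h2 : ∀ X Y, X < Y → μ X Y = -∑ᶠ Z ∈ Set.Ico X Y, μ X Z) (H e : L)
    (hi : e ⊓ H = ⊥) (C : L) (hC : C ≤ H) : μ e (C ⊔ e) = μ ⊥ C := by
  have hs := mu_sum μ h1 h2
  have hinf : ∀ D, D ≤ H → (D ⊔ e) ⊓ H = D := by
    intro D hD
    rw [sup_inf_assoc_of_le e hD, hi, sup_bot_eq]
  have hsup : ∀ D B, D ≤ H → e ≤ B → B ≤ D ⊔ e → (B ⊓ H) ⊔ e = B := by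
    intro D B hD he hB
    rw [inf_sup_assoc_of_le H he, inf_eq_left]
    exact hB.trans (sup_le_sup_right hD _)
  have := ext_lower (fun C => if C ≤ H then μ e (C ⊔ e) else 0)
    (fun C => if C ≤ H then μ ⊥ C else 0) ?_
  · simpa [hC] using congrFun this C
  intro B
  have hbot : ∀ D, D ≤ H → ((e = D ⊔ e) ↔ (⊥ = D)) := by
    intro D hD
    constructor
    · intro h; rw [← hinf D hD, ← h, hi]
    · rintro rfl; simp
  have hBH : B ⊓ H ≤ H := inf_le_right
  have e1 : ∑ A, (if A ≤ B then (if A ≤ H then μ ⊥ A else 0) else 0)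
      = if ⊥ = B ⊓ H then 1 else 0 := by
    rw [← hs]
    refine Finset.sum_congr rfl fun A _ => ?_
    by_cases hA : A ≤ B <;> by_cases hA' : A ≤ H <;> simp [hA, hA']
  have e2 : ∑ A, (if A ≤ B then (if A ≤ H then μ e (A ⊔ e) else 0) else 0)
      = if e = (B ⊓ H) ⊔ e then 1 else 0 := by
    rw [← hs]
    simp only [← ite_and]
    rw [← Finset.sum_filter, ← Finset.sum_filter]
    refine Finset.sum_bij' (fun A _ => A ⊔ e) (fun A _ => A ⊓ H) ?_ ?_ ?_ ?_ ?_
    · intro A hA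
      simp only [Finset.mem_filter, Finset.mem_univ, true_and] at hA ⊢
      exact ⟨le_sup_right, sup_le_sup_right (le_inf hA.1 hA.2) _⟩
    · intro A hA
      simp only [Finset.mem_filter, Finset.mem_univ, true_and] at hA ⊢
      refine ⟨?_, inf_le_right⟩
      have := inf_le_inf_right H hA.2
      rw [hinf _ hBH] at this
      exact this.trans inf_le_left
    · intro A hA
      simp only [Finset.mem_filter, Finset.mem_univ, true_and] at hA
      exact hinf A hA.2
    · intro A hA
      simp only [Finset.mem_filter, Finset.mem_univ, true_and] at hA
      exact hsup _ A hBH hA.1 hA.2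
    · intro A hA; rfl
  simp only [e1, e2, hbot _ hBH]

open Classical in
theorem main [IsModularLattice L] (μ : L → L → ℤ) (h1 : ∀ X, μ X X = 1)
    (h2 : ∀ X Y, X < Y → μ X Y = -∑ᶠ Z ∈ Set.Ico X Y, μ X Z) (ρ : L → ℕ) (r : ℕ)
    (hmono : Monotone ρ) (h0 : ρ ⊥ = 0)
    (hsub : ∀ A B, ρ (A ⊔ B) + ρ (A ⊓ B) ≤ ρ A + ρ B)
    (H e : L) (hH : IsCoatom H) (he : IsAtom e) (her : ρ e ≤ r)
    (hcol : ρ ⊤ = ρ H + r) (hi : e ⊓ H = ⊥) (hj : e ⊔ H = ⊤) :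
    charPoly μ ρ ⊥ ⊤ = charPoly μ ρ ⊥ e * charPoly μ ρ e ⊤
      - ∑ᶠ y ∈ {y : L | IsAtom y ∧ ¬ y ≤ H ∧ y ≠ e}, charPoly μ ρ y ⊤ := by
  have hs := mu_sum μ h1 h2
  have heH : ¬ e ≤ H := fun h => he.1 (by rw [← hi, inf_eq_left.2 h])
  have hinf : ∀ D, D ≤ H → (D ⊔ e) ⊓ H = D := by
    intro D hD
    rw [sup_inf_assoc_of_le e hD, hi, sup_bot_eq]
  have hsup : ∀ B, e ≤ B → (B ⊓ H) ⊔ e = B := by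
    intro B he
    rw [inf_sup_assoc_of_le H he, sup_comm H e, hj, inf_top_eq]
  have hre : ρ e = r := by
    have := hsub e H
    rw [hi, hj, h0] at this
    omega
  have hmue : μ ⊥ e = -1 := by
    have h := hs ⊥ e
    rw [if_neg he.1.symm, Finset.sum_eq_add (a := ⊥) (b := e) he.1.symm] at h
    · simp [h1] at h; omega
    · intro c _ hc
      rw [if_neg]
      rintro ⟨-, h⟩
      rcases he.le_iff.1 h with h | h
      · exact hc.1 h
      · exact hc.2 h
    · simp
    · simp
  have hPe : charPoly μ ρ ⊥ e = (X : ℤ[X]) ^ r - 1 := by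
    unfold charPoly
    rw [finsum_mem_ite, Finset.sum_eq_add (a := ⊥) (b := e) he.1.symm]
    · simp [h1, h0, hre, hmue]; ring
    · intro c _ hc
      rw [if_neg]
      rintro ⟨-, h⟩
      rcases he.le_iff.1 h with h | h
      · exact hc.1 h
      · exact hc.2 h
    · simp
    · simp
  have hP : ∀ y, charPoly μ ρ y ⊤
      = ∑ A, if y ≤ A then μ y A • ((X : ℤ[X]) ^ (ρ ⊤ - ρ A)) else 0 := by
    intro y
    unfold charPoly
    rw [finsum_mem_ite]
    simp
  have hshift : (X : ℤ[X]) ^ r * charPoly μ ρ e ⊤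
      = ∑ A, if A ≤ H then μ ⊥ A • ((X : ℤ[X]) ^ (ρ ⊤ - ρ A)) else 0 := by
    rw [hP, ← Finset.sum_filter, ← Finset.sum_filter, Finset.mul_sum]
    symm
    refine Finset.sum_bij' (fun A _ => A ⊔ e) (fun A _ => A ⊓ H) ?_ ?_ ?_ ?_ ?_
    · intro A hA
      simp
    · intro A hA
      simp
    · intro A hA
      simp only [Finset.mem_filter, Finset.mem_univ, true_and] at hA
      exact hinf A hA
    · intro A hA
      simp only [Finset.mem_filter, Finset.mem_univ, true_and] at hA
      exact hsup A hA
    · intro A hA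
      simp only [Finset.mem_filter, Finset.mem_univ, true_and] at hA
      rw [mu_shift μ h1 h2 H e hi A hA, mul_smul_comm, ← pow_add]
      congr 2
      have a1 := hsub A e
      have a2 := hsub (A ⊔ e) H
      rw [hinf A hA, sup_assoc, hj, sup_top_eq] at a2
      have a3 := hmono (le_top : A ⊔ e ≤ ⊤)
      omega
  have hall : ∑ y, (if IsAtom y ∧ ¬ y ≤ H then charPoly μ ρ y ⊤ else 0)
      = - ∑ A, if A ≤ H then 0 else μ ⊥ A • ((X : ℤ[X]) ^ (ρ ⊤ - ρ A)) := by
    calc _ = ∑ y, ∑ A, (if (IsAtom y ∧ ¬ y ≤ H) ∧ y ≤ A then μ y A else 0) •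
              ((X : ℤ[X]) ^ (ρ ⊤ - ρ A)) := by
            refine Finset.sum_congr rfl fun y _ => ?_
            by_cases hy : IsAtom y ∧ ¬ y ≤ H
            · rw [if_pos hy, hP]
              refine Finset.sum_congr rfl fun A _ => ?_
              by_cases hA : y ≤ A <;> simp [hy, hA]
            · rw [if_neg hy]
              simp [hy]
      _ = _ := by
            rw [Finset.sum_comm, ← Finset.sum_neg_distrib]
            refine Finset.sum_congr rfl fun A _ => ?_
            rw [← Finset.sum_smul, weisner μ h1 h2 H hH]
            split_ifs <;> simp
  have hsplit : ∑ y, (if IsAtom y ∧ ¬ y ≤ H then charPoly μ ρ y ⊤ else 0)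
      = charPoly μ ρ e ⊤
        + ∑ᶠ y ∈ {y : L | IsAtom y ∧ ¬ y ≤ H ∧ y ≠ e}, charPoly μ ρ y ⊤ := by
    rw [finsum_mem_ite]
    have : charPoly μ ρ e ⊤ = ∑ y, if y = e then charPoly μ ρ e ⊤ else 0 := by simp
    rw [this, ← Finset.sum_add_distrib]
    refine Finset.sum_congr rfl fun y _ => ?_
    by_cases hy : y = e
    · subst hy; simp [he, heH]
    · simp [hy]
  have htot : charPoly μ ρ ⊥ ⊤
      = (∑ A, if A ≤ H then μ ⊥ A • ((X : ℤ[X]) ^ (ρ ⊤ - ρ A)) else 0)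
       + ∑ A, if A ≤ H then 0 else μ ⊥ A • ((X : ℤ[X]) ^ (ρ ⊤ - ρ A)) := by
    rw [hP, ← Finset.sum_add_distrib]
    refine Finset.sum_congr rfl fun A _ => ?_
    by_cases hA : A ≤ H <;> simp [hA]
  rw [htot, ← hshift, hPe]
  linear_combination hall - hsplit

end

end CPAux

/-- let `M = (L(E), ρ)` be a `(q,r)`-polymatroid on `E = F_q^n`, `H` a
hyperplane of `E` that is a coloop of `M` (`ρ(H) = ρ(E) - r`), and `e` a one-dimensional
complement of `H`.  Then
`P(M; z) = P(M|_e; z) · P(M/e; z) - ∑_{y 1-dimensional, y ⊄ H, y ≠ e} P(M/y; z)`. -/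
theorem charPoly_coloop_decomposition
    {F : Type*} [Field F] [Fintype F] {n : ℕ} (hn : 0 < n)
    (r : ℕ) (hr : 0 < r)
    (ρ : Submodule F (Fin n → F) → ℕ)
    (hbound : ∀ A : Submodule F (Fin n → F), ρ A ≤ r * Module.finrank F A)
    (hmono : Monotone ρ)
    (hsubmod : ∀ A B : Submodule F (Fin n → F), ρ (A ⊔ B) + ρ (A ⊓ B) ≤ ρ A + ρ B)
    (μ : Submodule F (Fin n → F) → Submodule F (Fin n → F) → ℤ)
    (hμ_refl : ∀ X, μ X X = 1)
    (hμ_rec : ∀ X Y, X < Y → μ X Y = -∑ᶠ Z ∈ Set.Ico X Y, μ X Z)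
    (H : Submodule F (Fin n → F)) (hH : IsCoatom H)
    (hcoloop : ρ ⊤ = ρ H + r)
    (e : Submodule F (Fin n → F)) (he : Module.finrank F e = 1)
    (heH : e ⊓ H = ⊥) (heH' : e ⊔ H = ⊤) :
    charPoly μ ρ ⊥ ⊤ =
      charPoly μ ρ ⊥ e * charPoly μ ρ e ⊤
        - ∑ᶠ y ∈ {y : Submodule F (Fin n → F) |
            Module.finrank F y = 1 ∧ ¬ y ≤ H ∧ y ≠ e}, charPoly μ ρ y ⊤ := by
  classical
  letI : Fintype (Submodule F (Fin n → F)) := Fintype.ofFinite _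
  have hat : ∀ y : Submodule F (Fin n → F), Module.finrank F y = 1 ↔ IsAtom y := by
    intro y
    exact Submodule.isAtom_iff_finrank_eq_one.symm
  simp only [hat]
  refine CPAux.main μ hμ_refl hμ_rec ρ r hmono ?_ hsubmod H e hH ((hat e).1 he) ?_ hcoloop heH heH'
  · simpa using hbound ⊥
  · simpa [he] using hbound e
end
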